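/- Let S be a skew lattice and let b, x, y, z, w ∈ S satisfy x D z, y D w, b∧x∧b = b∧y∧b and b∧z∧b = b∧w∧b. Then b∧(x∨z)∧b = b∧(y∨w)∧b. Together with the corresponding ∧-statement, this shows that the coset equivalence determined by an upper D-class on a lower D-class is a congruence of that class. -/

import Mathlib

/-!
Inside a `𝒟`-class the join is the reversed meet, `x ∨ z = z ∧ x`, so it suffices to treat `∧`.
The meet of a skew lattice is a regular band, `a ∧ b ∧ a ∧ c ∧ a = a ∧ b ∧ c ∧ a`, which says that
`x ↦ b ∧ x ∧ b` preserves `∧`; hence `b ∧ x ∧ b` and `b ∧ z ∧ b` determine `b ∧ (z ∧ x) ∧ b`.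

Bands need not be regular; the join enters by producing, for `z` below the `𝒟`-class of `e`, the
element `z ∨ e ∨ z` of that class, which lies above `z`.
-/

/-- A band: an associative idempotent operation, kept unbundled so that both operations of a skew
lattice and their reverses can be fed to the same lemmas. -/
structure IsBand {S : Type*} (op : S → S → S) : Prop where
  assoc : ∀ x y z, op (op x y) z = op x (op y z)
  idem : ∀ x, op x x = x

/-- The preorder `x y x = x` of a band, whose associated equivalence is Green's relation `𝒟`. -/
def DLE {S : Type*} (op : S → S → S) (x y : S) : Prop :=
  op (op x y) x = x

/-- Green's relation `𝒟` of a band, in the form `x y x = x` and `y x y = y`. -/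
def DRel {S : Type*} (op : S → S → S) (x y : S) : Prop :=
  DLE op x y ∧ DLE op y x

namespace IsBand

variable {S : Type*} {op : S → S → S}

local infixl:70 " ⬝ " => op

theorem op_op_self (h : IsBand op) (x y : S) : x ⬝ (x ⬝ y) = x ⬝ y := by
  rw [← h.assoc, h.idem]

theorem dle_op (h : IsBand op) {x y z : S} (hy : DLE op x y) (hz : DLE op x z) :
    DLE op x (y ⬝ z) := by
  unfold DLE at *
  calc x ⬝ (y ⬝ z) ⬝ x
      = (x ⬝ z ⬝ x) ⬝ y ⬝ z ⬝ (x ⬝ y ⬝ x) := by rw [hy, hz, ← h.assoc]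
    _ = x ⬝ ((z ⬝ x ⬝ y) ⬝ (z ⬝ x ⬝ y)) ⬝ x := by simp only [h.assoc]
    _ = (x ⬝ z ⬝ x) ⬝ y ⬝ x := by rw [h.idem]; simp only [h.assoc]
    _ = x := by rw [hz, hy]

theorem op_dle_left (h : IsBand op) (x y : S) : DLE op (x ⬝ y) x := by
  unfold DLE
  rw [h.assoc, h.op_op_self, h.idem]

theorem op_dle_right (h : IsBand op) (x y : S) : DLE op (x ⬝ y) y := by
  unfold DLE
  rw [h.assoc x y y, h.idem, h.idem]

theorem sandwich_dle (h : IsBand op) (x y : S) : DLE op (x ⬝ y ⬝ x) y := by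
  unfold DLE
  calc x ⬝ y ⬝ x ⬝ y ⬝ (x ⬝ y ⬝ x) = (x ⬝ y) ⬝ ((x ⬝ y) ⬝ ((x ⬝ y) ⬝ x)) := by
        simp only [h.assoc]
    _ = x ⬝ y ⬝ x := by rw [h.op_op_self, h.op_op_self]

theorem dle_trans (h : IsBand op) {x y z : S} (hxy : DLE op x y) (hyz : DLE op y z) :
    DLE op x z := by
  -- The conjugate `g = y x y` lies in the `𝒟`-class of `x`, and `g z g = g` can be read off.
  unfold DLE at hxy hyz
  have sandwich_dle_z : DLE op (y ⬝ x ⬝ y) z := by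
    unfold DLE
    calc y ⬝ x ⬝ y ⬝ z ⬝ (y ⬝ x ⬝ y)
        = y ⬝ x ⬝ (y ⬝ z ⬝ y) ⬝ x ⬝ y := by simp only [h.assoc]
      _ = y ⬝ (x ⬝ y ⬝ x) ⬝ y := by rw [hyz]; simp only [h.assoc]
      _ = y ⬝ x ⬝ y := by rw [hxy]
  have hx : x ⬝ (y ⬝ x ⬝ y) ⬝ x = x := by
    calc x ⬝ (y ⬝ x ⬝ y) ⬝ x = (x ⬝ y ⬝ x) ⬝ y ⬝ x := by simp only [h.assoc]
      _ = x := by rw [hxy, hxy]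
  have hg := h.dle_op (h.dle_op (h.sandwich_dle y x) sandwich_dle_z) (h.sandwich_dle y x)
  generalize y ⬝ x ⬝ y = g at hx hg
  unfold DLE at *
  calc x ⬝ z ⬝ x = (x ⬝ g ⬝ x) ⬝ z ⬝ (x ⬝ g ⬝ x) := by rw [hx]
    _ = x ⬝ (g ⬝ (x ⬝ z ⬝ x) ⬝ g) ⬝ x := by simp only [h.assoc]
    _ = x := by rw [hg, hx]

end IsBand

/-- A skew lattice, given by its meet `wedge` and join `vee`. Idempotence of the two operations is
derived from the absorption laws in `IsSkewLattice.wedge_self`. -/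
structure IsSkewLattice {S : Type*} (wedge vee : S → S → S) : Prop where
  wedge_assoc : ∀ x y z, wedge (wedge x y) z = wedge x (wedge y z)
  vee_assoc : ∀ x y z, vee (vee x y) z = vee x (vee y z)
  wedge_vee_cancel_left : ∀ x y, wedge x (vee x y) = x
  wedge_vee_cancel_right : ∀ x y, wedge (vee y x) x = x
  vee_wedge_cancel_left : ∀ x y, vee x (wedge x y) = x
  vee_wedge_cancel_right : ∀ x y, vee (wedge y x) x = x

namespace IsSkewLattice

variable {S : Type*} {wedge vee : S → S → S}

local infixl:70 " ⋏ " => wedge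
local infixl:65 " ⋎ " => vee

theorem swap (h : IsSkewLattice wedge vee) : IsSkewLattice vee wedge where
  wedge_assoc := h.vee_assoc
  vee_assoc := h.wedge_assoc
  wedge_vee_cancel_left := h.vee_wedge_cancel_left
  wedge_vee_cancel_right := h.vee_wedge_cancel_right
  vee_wedge_cancel_left := h.wedge_vee_cancel_left
  vee_wedge_cancel_right := h.wedge_vee_cancel_right

theorem reverse (h : IsSkewLattice wedge vee) : IsSkewLattice (flip wedge) (flip vee) where
  wedge_assoc x y z := (h.wedge_assoc z y x).symm
  vee_assoc x y z := (h.vee_assoc z y x).symm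
  wedge_vee_cancel_left := h.wedge_vee_cancel_right
  wedge_vee_cancel_right := h.wedge_vee_cancel_left
  vee_wedge_cancel_left := h.vee_wedge_cancel_right
  vee_wedge_cancel_right := h.vee_wedge_cancel_left

theorem wedge_self (h : IsSkewLattice wedge vee) (x : S) : x ⋏ x = x := by
  calc x ⋏ x = x ⋏ (x ⋎ x ⋏ x) := by rw [h.vee_wedge_cancel_left]
    _ = x := h.wedge_vee_cancel_left x _

theorem isBand_wedge (h : IsSkewLattice wedge vee) : IsBand wedge :=
  ⟨h.wedge_assoc, h.wedge_self⟩

theorem isBand_vee (h : IsSkewLattice wedge vee) : IsBand vee :=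
  h.swap.isBand_wedge

theorem dle_vee_of_dle_wedge (h : IsSkewLattice wedge vee) {x y : S} (hxy : DLE wedge x y) :
    DLE vee y x := by
  unfold DLE at *
  have absorb : y ⋎ x ⋎ y ⋏ x = y := by
    have : x ⋎ y ⋏ x = y ⋏ x := by
      simpa only [← h.wedge_assoc, hxy] using h.vee_wedge_cancel_right (y ⋏ x) x
    rw [h.vee_assoc, this, h.vee_wedge_cancel_left]
  calc y ⋎ x ⋎ y = y ⋎ x ⋎ (y ⋎ x ⋎ y ⋏ x) := by rw [absorb]
    _ = y ⋎ x ⋎ y ⋏ x := by rw [← h.vee_assoc, h.isBand_vee.idem]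
    _ = y := absorb

theorem dle_wedge_of_dle_vee (h : IsSkewLattice wedge vee) {x y : S} (hxy : DLE vee x y) :
    DLE wedge y x :=
  h.swap.dle_vee_of_dle_wedge hxy

theorem exists_dRel_wedge_eq (h : IsSkewLattice wedge vee) {z e : S} (hze : DLE wedge z e) :
    ∃ k, DRel wedge e k ∧ k ⋏ z = z := by
  have join : e ⋎ z ⋎ e = e := h.dle_vee_of_dle_wedge hze
  refine ⟨z ⋎ e ⋎ z, ⟨h.dle_wedge_of_dle_vee ?_, h.dle_wedge_of_dle_vee ?_⟩,
    h.wedge_vee_cancel_right z _⟩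
  · exact h.isBand_vee.sandwich_dle z e
  · calc e ⋎ (z ⋎ e ⋎ z) ⋎ e = (e ⋎ z ⋎ e) ⋎ z ⋎ e := by simp only [h.vee_assoc]
      _ = e := by rw [join, join]

theorem wedge_wedge_eq_of_dle (h : IsSkewLattice wedge vee) {z e f : S} (hze : DLE wedge z e)
    (hef : DLE wedge e f) : e ⋏ f ⋏ z = e ⋏ z := by
  obtain ⟨k, ⟨hek, hke⟩, hkz⟩ := h.exists_dRel_wedge_eq hze
  have hefk : e ⋏ (f ⋏ k) ⋏ e = e := h.isBand_wedge.dle_op hef hek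
  unfold DLE at hke
  calc e ⋏ f ⋏ z = e ⋏ f ⋏ (k ⋏ e ⋏ k ⋏ z) := by rw [hke, hkz]
    _ = (e ⋏ (f ⋏ k) ⋏ e) ⋏ (k ⋏ z) := by simp only [h.wedge_assoc]
    _ = e ⋏ z := by rw [hefk, hkz]

theorem wedge_regular_absorb (h : IsSkewLattice wedge vee) (a b c : S) :
    (a ⋏ b ⋏ a ⋏ c ⋏ a) ⋏ (a ⋏ b ⋏ c ⋏ a) = a ⋏ b ⋏ c ⋏ a := by
  have hB := h.isBand_wedge
  have below_ab : DLE wedge (c ⋏ a ⋏ b ⋏ c ⋏ a) (a ⋏ b) := by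
    rw [h.wedge_assoc _ c a, h.wedge_assoc c a b]
    exact hB.dle_trans (hB.op_dle_left _ _) (hB.op_dle_right _ _)
  calc (a ⋏ b ⋏ a ⋏ c ⋏ a) ⋏ (a ⋏ b ⋏ c ⋏ a)
      = a ⋏ b ⋏ a ⋏ (c ⋏ a ⋏ b ⋏ c ⋏ a) := by simp only [h.wedge_assoc, hB.op_op_self]
    _ = (a ⋏ b ⋏ c) ⋏ ((a ⋏ b ⋏ c) ⋏ a) := by
      rw [h.wedge_wedge_eq_of_dle below_ab (hB.op_dle_left a b)]; simp only [h.wedge_assoc]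
    _ = a ⋏ b ⋏ c ⋏ a := hB.op_op_self _ _

theorem wedge_regular (h : IsSkewLattice wedge vee) (a b c : S) :
    a ⋏ b ⋏ a ⋏ c ⋏ a = a ⋏ b ⋏ c ⋏ a := by
  have hB := h.isBand_wedge
  set s := a ⋏ b ⋏ a ⋏ c ⋏ a with hs
  set t := a ⋏ b ⋏ c ⋏ a with ht
  have hst : s ⋏ t = t := h.wedge_regular_absorb a b c
  have hts : t ⋏ s = t := by
    simpa only [flip, hs, ht, h.wedge_assoc] using h.reverse.wedge_regular_absorb a c b
  have hsb : DLE wedge s b := by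
    rw [hs, h.wedge_assoc _ c a, h.wedge_assoc _ a (c ⋏ a)]
    exact hB.dle_trans (hB.op_dle_left _ _) (hB.op_dle_right _ _)
  have hsc : DLE wedge s c := hB.dle_trans (hB.op_dle_left _ _) (hB.op_dle_right _ _)
  have hsa : s ⋏ a = s := by rw [hs, h.wedge_assoc, h.wedge_self]
  have has : a ⋏ s = s := by simp only [hs, h.wedge_assoc, hB.op_op_self]
  calc s = s ⋏ (b ⋏ c) ⋏ s := (hB.dle_op hsb hsc).symm
    _ = (s ⋏ a) ⋏ (b ⋏ c) ⋏ (a ⋏ s) := by rw [hsa, has]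
    _ = s ⋏ t ⋏ s := by simp only [ht, h.wedge_assoc]
    _ = t := by rw [hst, hts]

theorem sandwich_wedge (h : IsSkewLattice wedge vee) (b x y : S) :
    b ⋏ (x ⋏ y) ⋏ b = (b ⋏ x ⋏ b) ⋏ (b ⋏ y ⋏ b) := by
  have := h.wedge_regular b x y
  simp only [h.wedge_assoc, h.isBand_wedge.op_op_self] at this ⊢
  exact this.symm

theorem vee_eq_wedge_of_dRel (h : IsSkewLattice wedge vee) {x z : S} (hxz : DRel wedge x z) :
    x ⋎ z = z ⋏ x := by
  have hB := h.isBand_vee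
  have join_x : z ⋎ x ⋎ z = z := h.dle_vee_of_dle_wedge hxz.1
  have join_z : x ⋎ z ⋎ x = x := h.dle_vee_of_dle_wedge hxz.2
  have below_x : DLE wedge (x ⋎ z) x := h.dle_wedge_of_dle_vee (by
    unfold DLE; rw [← h.vee_assoc, hB.idem, join_z])
  have below_z : DLE wedge (x ⋎ z) z := h.dle_wedge_of_dle_vee (by
    unfold DLE; rw [h.vee_assoc, h.vee_assoc, hB.idem, ← h.vee_assoc, join_x])
  calc x ⋎ z = (x ⋎ z) ⋏ (z ⋏ x) ⋏ (x ⋎ z) := (h.isBand_wedge.dle_op below_z below_x).symm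
    _ = ((x ⋎ z) ⋏ z) ⋏ (x ⋏ (x ⋎ z)) := by simp only [h.wedge_assoc]
    _ = z ⋏ x := by rw [h.wedge_vee_cancel_right, h.wedge_vee_cancel_left]

end IsSkewLattice

/-- The coset equivalence is compatible with ∨. -/
theorem coset_equiv_vee_congr {S : Type*} (wedge vee : S → S → S)
    (wedge_idem : ∀ x : S, wedge x x = x)
    (vee_idem : ∀ x : S, vee x x = x)
    (wedge_assoc : ∀ x y z : S, wedge (wedge x y) z = wedge x (wedge y z))
    (vee_assoc : ∀ x y z : S, vee (vee x y) z = vee x (vee y z))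
    (abs₁ : ∀ x y : S, wedge x (vee x y) = x)
    (abs₂ : ∀ x y : S, wedge (vee y x) x = x)
    (abs₃ : ∀ x y : S, vee x (wedge x y) = x)
    (abs₄ : ∀ x y : S, vee (wedge y x) x = x)
    (b x y z w : S)
    (hxz : wedge (wedge x z) x = x ∧ wedge (wedge z x) z = z)
    (hyw : wedge (wedge y w) y = y ∧ wedge (wedge w y) w = w)
    (hxy : wedge (wedge b x) b = wedge (wedge b y) b)
    (hzw : wedge (wedge b z) b = wedge (wedge b w) b) :
    wedge (wedge b (vee x z)) b = wedge (wedge b (vee y w)) b := by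
  have h : IsSkewLattice wedge vee := ⟨wedge_assoc, vee_assoc, abs₁, abs₂, abs₃, abs₄⟩
  rw [h.vee_eq_wedge_of_dRel hxz, h.vee_eq_wedge_of_dRel hyw, h.sandwich_wedge, h.sandwich_wedge,
    hzw, hxy]
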